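/- Let X, Y be finite sets with |X| = m and |Y| = k. For any set A of channels from X to Y and any ε > 0, the ε-covering number N_ε(A) satisfies N_ε(A) ≤ (1/(2ε) + (k+1)/2)^{m·k}. -/

import Mathlib

/-!
A maximal `ε`-separated set of channels is a cover. Around each of its members, translated by
`(ε, …, ε)`, put an `ε`-ball of the norm `max_x ∑_y |z (x, y)|`. These balls are disjoint, lie in
the open positive orthant and in the ball of radius `1 + (k + 1) ε` about `0`. As the large ball is
invariant under sign changes, the positive orthant carries only the fraction `2 ^ (-m k)` of its
volume. Comparing volumes gives the bound.
-/

open MeasureTheory Module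
open scoped ENNReal NNReal

lemma exists_isCover_card_le_of_isSeparated {α : Type*} {U : SetRel α α} [U.IsRefl] [U.IsSymm]
    {s : Set α} {r : ℝ} (hr : ∀ N : Finset α, ↑N ⊆ s → U.IsSeparated N → (N.card : ℝ) ≤ r) :
    ∃ N : Finset α, ↑N ⊆ s ∧ U.IsCover s N ∧ (N.card : ℝ) ≤ r := by
  classical
  let separated : Set (Finset α) := {N | ↑N ⊆ s ∧ U.IsSeparated N}
  have card_bdd : BddAbove (Finset.card '' separated) :=
    ⟨⌊r⌋₊, by rintro _ ⟨N, hN, rfl⟩; exact Nat.le_floor (hr N hN.1 hN.2)⟩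
  obtain ⟨N, ⟨hNs, hN⟩, hmax⟩ := Set.Finite.exists_maximalFor' Finset.card separated
    card_bdd.finite ⟨∅, by simp [separated]⟩
  refine ⟨N, hNs, .of_maximal_isSeparated ⟨⟨hNs, hN⟩, fun T ⟨hTs, hT⟩ hNT a ha ↦ ?_⟩, hr N hNs hN⟩
  have insert_subset : ↑(insert a N) ⊆ T := by
    rw [Finset.coe_insert]; exact Set.insert_subset ha hNT
  have card_le := hmax ⟨insert_subset.trans hTs, hT.mono_right insert_subset⟩
    (Finset.card_le_card (Finset.subset_insert a N))
  by_contra haN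
  rw [Finset.card_insert_of_notMem haN] at card_le
  omega

section SignFlips

lemma volume_preimage_abs_of_subset_Ioi {s : Set ℝ} (hs : MeasurableSet s) (hpos : s ⊆ Set.Ioi 0) :
    volume (abs ⁻¹' s) = 2 * volume s := by
  have abs_preimage : abs ⁻¹' s = s ∪ -s := by
    ext t
    simp only [Set.mem_preimage, Set.mem_union, Set.mem_neg]
    constructor
    · rcases abs_choice t with h | h <;> rw [h] <;> tauto
    · rintro (h | h)
      · rwa [abs_of_pos (hpos h)]
      · rwa [← abs_neg, abs_of_pos (hpos h)]
  have disjoint : Disjoint s (-s) :=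
    Set.disjoint_left.2 fun t ht ht' ↦
      lt_asymm (Set.mem_Ioi.1 (hpos ht)) (neg_pos.1 (hpos (Set.mem_neg.1 ht')))
  rw [abs_preimage, measure_union disjoint hs.neg, Measure.measure_neg, two_mul]

lemma measurePreserving_abs :
    MeasurePreserving (abs : ℝ → ℝ) volume ((2 : ℝ≥0) • volume.restrict (Set.Ioi 0)) := by
  refine ⟨measurable_abs, Measure.ext fun s hs ↦ ?_⟩
  have ae_eq : (abs ⁻¹' s : Set ℝ) =ᵐ[volume] (abs ⁻¹' (s ∩ Set.Ioi 0) : Set ℝ) := by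
    filter_upwards [Measure.ae_ne volume (0 : ℝ)] with t ht
    apply propext
    change |t| ∈ s ↔ |t| ∈ s ∩ Set.Ioi 0
    simp [ht]
  rw [Measure.map_apply measurable_abs hs, measure_congr ae_eq,
    volume_preimage_abs_of_subset_Ioi (hs.inter measurableSet_Ioi) Set.inter_subset_right,
    Measure.coe_nnreal_smul_apply, Measure.restrict_apply hs, ENNReal.coe_ofNat]

variable {ι : Type*} [Fintype ι]

lemma measure_pi_smul {α : ι → Type*} [∀ i, MeasurableSpace (α i)] (μ : ∀ i, Measure (α i))
    [∀ i, SigmaFinite (μ i)] (c : ι → ℝ≥0) :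
    Measure.pi (fun i ↦ c i • μ i) = (∏ i, c i) • Measure.pi μ :=
  Measure.pi_eq fun s _ ↦ by
    simp only [Measure.smul_apply, Measure.pi_pi, Finset.prod_smul]

lemma volume_preimage_abs_of_subset_orthant {s : Set (ι → ℝ)} (hs : MeasurableSet s)
    (hpos : s ⊆ Set.univ.pi fun _ ↦ Set.Ioi 0) :
    volume (abs ⁻¹' s) = 2 ^ Fintype.card ι * volume s := by
  have preserving : MeasurePreserving (abs : (ι → ℝ) → ι → ℝ) volume _ :=
    measurePreserving_pi (fun _ ↦ volume) _ fun _ ↦ measurePreserving_abs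
  rw [preserving.measure_preimage hs.nullMeasurableSet, measure_pi_smul, ← Measure.restrict_pi_pi,
    Measure.smul_apply, Measure.restrict_eq_self _ hpos]
  simp [ENNReal.smul_def, volume_pi]

end SignFlips

section SeminormBall

lemma measure_seminorm_ball_eq_measure_ball_zero {E : Type*} [AddCommGroup E] [Module ℝ E]
    [MeasurableSpace E] (μ : Measure E) [μ.IsAddLeftInvariant] (p : Seminorm ℝ E) (a : E) (r : ℝ) :
    μ (p.ball a r) = μ (p.ball 0 r) := by
  rw [← measure_vadd μ a (p.ball 0 r), p.vadd_ball, vadd_eq_add, add_zero]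

lemma seminorm_ball_add_smul_subset_ball {E : Type*} [AddCommGroup E] [Module ℝ E]
    (p : Seminorm ℝ E) {v : E} (e : E) {ρ r : ℝ} (hv : p v ≤ ρ) (hr : 0 < r) :
    p.ball (v + r • e) r ⊆ p.ball 0 ((ρ / r + p e + 1) * r) := by
  intro z hz
  rw [p.mem_ball_zero]
  calc p z = p ((z - (v + r • e)) + (v + r • e)) := by rw [sub_add_cancel]
    _ ≤ p (z - (v + r • e)) + (p v + r * p e) := by
        grw [map_add_le_add, map_add_le_add, map_smul_eq_mul, Real.norm_of_nonneg hr.le]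
    _ < r + (ρ + r * p e) := add_lt_add_of_lt_of_le (p.mem_ball.1 hz) (by gcongr)
    _ = (ρ / r + p e + 1) * r := by field_simp; ring

lemma measure_seminorm_ball_ne_top {E : Type*} [NormedAddCommGroup E] [NormedSpace ℝ E]
    [ProperSpace E] [MeasurableSpace E] (μ : Measure E) [IsFiniteMeasureOnCompacts μ]
    {p : Seminorm ℝ E} (hp : ∀ z, ‖z‖ ≤ p z) (r : ℝ) : μ (p.ball 0 r) ≠ ∞ := by
  have ball_subset : p.ball 0 r ⊆ Metric.ball 0 r := fun z hz ↦ by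
    simpa using (hp z).trans_lt (p.mem_ball_zero.1 hz)
  exact measure_ne_top_of_subset ball_subset measure_ball_lt_top.ne

variable {E : Type*} [NormedAddCommGroup E] [NormedSpace ℝ E] [FiniteDimensional ℝ E]

lemma isOpen_seminorm_ball (p : Seminorm ℝ E) (a : E) (r : ℝ) : IsOpen (p.ball a r) := by
  have continuous : Continuous p := continuousOn_univ.1 (p.convexOn.continuousOn isOpen_univ)
  exact isOpen_lt (continuous.comp (continuous_id.sub continuous_const)) continuous_const

variable [MeasurableSpace E] [BorelSpace E] (μ : Measure E) [μ.IsAddHaarMeasure]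
  (p : Seminorm ℝ E)

lemma measure_seminorm_ball_zero_mul {c : ℝ} (hc : 0 < c) (r : ℝ) :
    μ (p.ball 0 (c * r)) = ENNReal.ofReal (c ^ finrank ℝ E) * μ (p.ball 0 r) := by
  rw [← abs_of_pos (pow_pos hc _), ← Measure.addHaar_smul, p.smul_ball_zero hc.ne',
    Real.norm_of_nonneg hc.le]

lemma measure_biUnion_seminorm_ball {α : Type*} {S : Finset α} {u : α → E} {r : ℝ}
    (hsep : (S : Set α).Pairwise fun a b ↦ 2 * r ≤ p (u a - u b)) :
    μ (⋃ a ∈ S, p.ball (u a) r) = S.card * μ (p.ball 0 r) := by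
  have disjoint : (S : Set α).PairwiseDisjoint fun a ↦ p.ball (u a) r := by
    refine fun a ha b hb hab ↦ Set.disjoint_left.2 fun z hza hzb ↦ (hsep ha hb hab).not_gt ?_
    calc p (u a - u b) ≤ p (u a - z) + p (z - u b) := by
          simpa using map_add_le_add p (u a - z) (z - u b)
      _ = p (z - u a) + p (z - u b) := by rw [map_sub_rev]
      _ < 2 * r := by linarith [p.mem_ball.1 hza, p.mem_ball.1 hzb]
  rw [measure_biUnion_finset disjoint fun a _ ↦ (isOpen_seminorm_ball p _ _).measurableSet]
  simp [measure_seminorm_ball_eq_measure_ball_zero]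

end SeminormBall

section Packing

variable {α ι : Type*} [Fintype ι] {p : Seminorm ℝ (ι → ℝ)}

lemma seminorm_ball_add_smul_one_subset_orthant (hp_norm : ∀ z, ‖z‖ ≤ p z) {v : ι → ℝ} (hv : 0 ≤ v)
    (r : ℝ) : p.ball (v + r • 1) r ⊆ Set.univ.pi fun _ ↦ Set.Ioi 0 := by
  intro z hz i _
  have coord_lt : |z i - (v i + r)| < r := by
    simpa using (norm_le_pi_norm (z - (v + r • 1)) i).trans_lt ((hp_norm _).trans_lt hz)
  rw [Set.mem_Ioi]
  linarith [neg_lt_of_abs_lt coord_lt, show 0 ≤ v i from hv i]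

lemma two_pow_mul_card_mul_volume_seminorm_ball_le (hp_norm : ∀ z, ‖z‖ ≤ p z)
    (hp_abs : ∀ z, p z ≤ p |z|) {S : Finset α} {v : α → ι → ℝ} {ρ r : ℝ}
    (hv_nonneg : ∀ a ∈ S, 0 ≤ v a) (hv_le : ∀ a ∈ S, p (v a) ≤ ρ) (hr : 0 < r)
    (hsep : (S : Set α).Pairwise fun a b ↦ 2 * r ≤ p (v a - v b)) :
    2 ^ Fintype.card ι * (S.card * volume (p.ball 0 r)) ≤
      volume (p.ball 0 ((ρ / r + p 1 + 1) * r)) := by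
  let T : Set (ι → ℝ) := ⋃ a ∈ S, p.ball (v a + r • 1) r
  have measurable_T : MeasurableSet T :=
    S.measurableSet_biUnion fun a _ ↦ (isOpen_seminorm_ball p _ _).measurableSet
  have T_subset_orthant : T ⊆ Set.univ.pi fun _ ↦ Set.Ioi 0 := Set.iUnion₂_subset fun a ha ↦
    seminorm_ball_add_smul_one_subset_orthant hp_norm (hv_nonneg a ha) r
  have T_subset_ball : T ⊆ p.ball 0 ((ρ / r + p 1 + 1) * r) := Set.iUnion₂_subset fun a ha ↦
    seminorm_ball_add_smul_subset_ball p 1 (hv_le a ha) hr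
  have abs_preimage_T_subset_ball : abs ⁻¹' T ⊆ p.ball 0 ((ρ / r + p 1 + 1) * r) := fun z hz ↦
    p.mem_ball_zero.2 ((hp_abs z).trans_lt (p.mem_ball_zero.1 (T_subset_ball hz)))
  calc 2 ^ Fintype.card ι * (S.card * volume (p.ball 0 r))
    _ = 2 ^ Fintype.card ι * volume T := by
        rw [measure_biUnion_seminorm_ball volume p (by simpa using hsep)]
    _ = volume (abs ⁻¹' T) :=
        (volume_preimage_abs_of_subset_orthant measurable_T T_subset_orthant).symm
    _ ≤ volume (p.ball 0 ((ρ / r + p 1 + 1) * r)) := measure_mono abs_preimage_T_subset_ball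

lemma card_le_of_pairwise_two_mul_le_seminorm (hp_norm : ∀ z, ‖z‖ ≤ p z)
    (hp_abs : ∀ z, p z ≤ p |z|) {S : Finset α} {v : α → ι → ℝ} {ρ r : ℝ}
    (hv_nonneg : ∀ a ∈ S, 0 ≤ v a) (hv_le : ∀ a ∈ S, p (v a) ≤ ρ) (hρ : 0 ≤ ρ) (hr : 0 < r)
    (hsep : (S : Set α).Pairwise fun a b ↦ 2 * r ≤ p (v a - v b)) :
    (S.card : ℝ) ≤ ((ρ / r + p 1 + 1) / 2) ^ Fintype.card ι := by
  have volume_le :=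
    two_pow_mul_card_mul_volume_seminorm_ball_le hp_norm hp_abs hv_nonneg hv_le hr hsep
  set c := ρ / r + p 1 + 1
  have hc : 0 < c := by positivity
  have volume_ne_zero : volume (p.ball 0 r) ≠ 0 :=
    ((isOpen_seminorm_ball p 0 r).measure_pos volume ⟨0, p.mem_ball_self hr⟩).ne'
  have two_pow_mul_card_le :
      2 ^ Fintype.card ι * (S.card : ℝ≥0∞) ≤ ENNReal.ofReal (c ^ Fintype.card ι) := by
    rwa [measure_seminorm_ball_zero_mul volume p hc, finrank_fintype_fun_eq_card, ← mul_assoc,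
      ENNReal.mul_le_mul_iff_left volume_ne_zero
        (measure_seminorm_ball_ne_top volume hp_norm r)] at volume_le
  rw [div_pow, le_div_iff₀' (by positivity)]
  simpa [hc.le] using ENNReal.toReal_mono ENNReal.ofReal_ne_top two_pow_mul_card_le

theorem exists_cover_card_le_of_seminorm (hp_norm : ∀ z, ‖z‖ ≤ p z) (hp_abs : ∀ z, p z ≤ p |z|)
    {s : Set α} {v : α → ι → ℝ} {ρ r : ℝ} (hv_nonneg : ∀ a ∈ s, 0 ≤ v a)
    (hv_le : ∀ a ∈ s, p (v a) ≤ ρ) (hρ : 0 ≤ ρ) (hr : 0 < r) :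
    ∃ S : Finset α, ↑S ⊆ s ∧ (∀ a ∈ s, ∃ b ∈ S, p (v a - v b) ≤ 2 * r) ∧
      (S.card : ℝ) ≤ ((ρ / r + p 1 + 1) / 2) ^ Fintype.card ι := by
  let U : SetRel α α := {ab | p (v ab.1 - v ab.2) ≤ 2 * r}
  have : U.IsRefl := ⟨fun a ↦ by simp [U, hr.le]⟩
  have : U.IsSymm := ⟨fun a b hab ↦ (map_sub_rev p _ _).trans_le hab⟩
  refine exists_isCover_card_le_of_isSeparated (U := U) fun S hSs hS ↦ ?_
  exact card_le_of_pairwise_two_mul_le_seminorm hp_norm hp_abs (fun a ha ↦ hv_nonneg a (hSs ha))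
    (fun a ha ↦ hv_le a (hSs ha)) hρ hr (hS.mono' fun a b hab ↦ (not_le.1 hab).le)

end Packing

section Channel

variable {X Y : Type*} [Fintype X] [Fintype Y]

/-- The norm `max_x ∑_y |z (x, y)|` on matrices, which is twice the distance between channels.
Matrices are uncurried here, so that Lebesgue measure on `X × Y → ℝ` applies. The maximum is `0`
when `X` is empty. -/
noncomputable def maxRowSum (X Y : Type*) [Fintype X] [Fintype Y] : Seminorm ℝ (X × Y → ℝ) :=
  Finset.univ.sup fun x ↦ ∑ y, (normSeminorm ℝ ℝ).comp (LinearMap.proj (x, y))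

lemma maxRowSum_le_iff {z : X × Y → ℝ} {r : ℝ} (hr : 0 ≤ r) :
    maxRowSum X Y z ≤ r ↔ ∀ x, ∑ y, |z (x, y)| ≤ r := by
  have row_apply (x : X) :
      (∑ y, (normSeminorm ℝ ℝ).comp (LinearMap.proj (x, y))) z = ∑ y, |z (x, y)| := by
    simp
  simp only [← row_apply]
  exact ⟨fun h x ↦ (Seminorm.le_finset_sup_apply (Finset.mem_univ x)).trans h,
    fun h ↦ Seminorm.finset_sup_apply_le hr fun x _ ↦ h x⟩

lemma sum_abs_le_maxRowSum (z : X × Y → ℝ) (x : X) : ∑ y, |z (x, y)| ≤ maxRowSum X Y z :=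
  (maxRowSum_le_iff (apply_nonneg _ z)).1 le_rfl x

lemma norm_le_maxRowSum (z : X × Y → ℝ) : ‖z‖ ≤ maxRowSum X Y z :=
  (pi_norm_le_iff_of_nonneg (apply_nonneg _ z)).2 fun i ↦
    (Finset.single_le_sum (f := fun y ↦ |z (i.1, y)|) (fun _ _ ↦ abs_nonneg _)
      (Finset.mem_univ i.2)).trans (sum_abs_le_maxRowSum z i.1)

lemma maxRowSum_le_maxRowSum_abs (z : X × Y → ℝ) : maxRowSum X Y z ≤ maxRowSum X Y |z| :=
  (maxRowSum_le_iff (apply_nonneg _ _)).2 fun x ↦ by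
    simpa using sum_abs_le_maxRowSum |z| x

lemma maxRowSum_one_le : maxRowSum X Y 1 ≤ Fintype.card Y :=
  (maxRowSum_le_iff (Nat.cast_nonneg _)).2 fun x ↦ by simp

theorem covering_number_bound_general (𝒜 : Set (X → Y → ℝ)) {ρ : ℝ} (hρ : 0 ≤ ρ)
    (hnonneg : ∀ A ∈ 𝒜, ∀ x y, 0 ≤ A x y) (hsum : ∀ A ∈ 𝒜, ∀ x, ∑ y, A x y ≤ ρ)
    {ε : ℝ} (hε : 0 < ε) :
    ∃ S : Finset (X → Y → ℝ), ↑S ⊆ 𝒜 ∧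
      (∀ A ∈ 𝒜, ∃ B ∈ S, ∀ x, (1 / 2) * ∑ y, |A x y - B x y| ≤ ε) ∧
      (S.card : ℝ) ≤
        (ρ / (2 * ε) + (Fintype.card Y + 1) / 2) ^ (Fintype.card X * Fintype.card Y) := by
  have maxRowSum_le (A) (hA : A ∈ 𝒜) : maxRowSum X Y (fun i ↦ A i.1 i.2) ≤ ρ :=
    (maxRowSum_le_iff hρ).2 fun x ↦ by
      simpa only [abs_of_nonneg (hnonneg A hA x _)] using hsum A hA x
  obtain ⟨S, hS𝒜, cover, card_le⟩ := exists_cover_card_le_of_seminorm (v := fun A i ↦ A i.1 i.2)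
    norm_le_maxRowSum maxRowSum_le_maxRowSum_abs (fun A hA i ↦ hnonneg A hA i.1 i.2)
    maxRowSum_le hρ hε
  refine ⟨S, hS𝒜, fun A hA ↦ ?_, card_le.trans ?_⟩
  · obtain ⟨B, hB, hAB⟩ := cover A hA
    refine ⟨B, hB, fun x ↦ ?_⟩
    have row_le : ∑ y, |A x y - B x y| ≤ 2 * ε := (sum_abs_le_maxRowSum _ x).trans hAB
    linarith
  · rw [Fintype.card_prod]
    calc ((ρ / ε + maxRowSum X Y 1 + 1) / 2) ^ (Fintype.card X * Fintype.card Y)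
      _ ≤ ((ρ / ε + Fintype.card Y + 1) / 2) ^ (Fintype.card X * Fintype.card Y) := by
          gcongr; exact maxRowSum_one_le
      _ = _ := by congr 1; field_simp; ring

end Channel

/-- Covering-number bound: let `X, Y` be finite sets with `|X| = m`, `|Y| = k`. For any set
`𝒜` of channels from `X` to `Y` and any `ε > 0`, there is a subset `S ⊆ 𝒜` which is an
`ε`-cover of `𝒜` (in the distance `d(A,B) = max_x ½ ∑_y |A(y|x) − B(y|x)|`) of cardinality
at most `(1/(2ε) + (k+1)/2)^{m·k}`. -/
theorem covering_number_bound
    {X Y : Type*} [Fintype X] [Fintype Y]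
    (m k : ℕ) (hm : Fintype.card X = m) (hk : Fintype.card Y = k)
    (𝒜 : Set (X → Y → ℝ))
    (hch : ∀ A ∈ 𝒜, (∀ x y, 0 ≤ A x y) ∧ ∀ x, ∑ y, A x y = 1)
    (ε : ℝ) (hε : 0 < ε) :
    ∃ S : Finset (X → Y → ℝ), ↑S ⊆ 𝒜 ∧
      (∀ A ∈ 𝒜, ∃ B ∈ S, ∀ x, (1 / 2) * ∑ y, |A x y - B x y| ≤ ε) ∧
      (S.card : ℝ) ≤ (1 / (2 * ε) + (k + 1) / 2) ^ (m * k) := by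
  subst hm hk
  exact covering_number_bound_general 𝒜 zero_le_one (fun A hA ↦ (hch A hA).1)
    (fun A hA x ↦ ((hch A hA).2 x).le) hε
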